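/- arXiv:math/0602081 — 2 statements merged into one kernel-verified Lean document; each statement's English description precedes it below -/
import Mathlib

section
/- C¹ implies strict differentiability in finite dimensions over locally compact fields: Let (𝕜,|·|) be a locally compact valued field, E a finite-dimensional normed 𝕜-vector space, F a normed 𝕜-vector space, U ⊆ E open, and f : U → F a C¹ map with witnessing continuous map f^{[1]} : U^{[1]} → F. Then f is strictly differentiable at every point of U: for each x ∈ U there is a continuous 𝕜-linear map A : E → F with A(y) = f^{[1]}(x,y,0) for all y ∈ E such that for every ε > 0 there is a neighbourhood W of x in U with ‖f(y) − f(z) − A(y − z)‖ ≤ ε·‖y − z‖ for all y, z ∈ W. -/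
open Set Metric Filter Topology

/-- For an open set `U ⊆ E`, the extended domain
`U^{[1]} = {(x,y,t) : x ∈ U, x + t·y ∈ U}` of the difference quotient map. -/
def UOne (𝕜 : Type*) {E : Type*} [Field 𝕜] [AddCommGroup E] [Module 𝕜 E]
    (U : Set E) : Set (E × E × 𝕜) :=
  {p | p.1 ∈ U ∧ p.1 + p.2.2 • p.2.1 ∈ U}

/-- `g : U^{[1]} → F` extends the directional difference quotients of `f`:
`g (x,y,t) = t⁻¹ • (f (x + t·y) - f x)` whenever `t ≠ 0`. -/
def IsDiffQuotOn (𝕜 : Type*) {E F : Type*} [Field 𝕜] [AddCommGroup E] [Module 𝕜 E]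
    [AddCommGroup F] [Module 𝕜 F] (U : Set E) (f : E → F) (g : E × E × 𝕜 → F) : Prop :=
  ∀ p ∈ UOne 𝕜 U, p.2.2 ≠ 0 → g p = (p.2.2)⁻¹ • (f (p.1 + p.2.2 • p.2.1) - f p.1)

/-- `f` is `C¹` on the open set `U` in the sense of extended difference quotients:
`f` is continuous on `U` and there is a continuous map `f^{[1]} : U^{[1]} → F`
extending the directional difference quotients of `f`. -/
def IsC1On (𝕜 : Type*) {E F : Type*} [Field 𝕜] [TopologicalSpace 𝕜]
    [AddCommGroup E] [Module 𝕜 E] [TopologicalSpace E]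
    [AddCommGroup F] [Module 𝕜 F] [TopologicalSpace F]
    (U : Set E) (f : E → F) : Prop :=
  ContinuousOn f U ∧
    ∃ g : E × E × 𝕜 → F, ContinuousOn g (UOne 𝕜 U) ∧ IsDiffQuotOn 𝕜 U f g

/-- `f` is `C²` on the open set `U`: it is `C¹` with a witness `f^{[1]}` which is
itself `C¹` on the open set `U^{[1]}`. -/
def IsC2On (𝕜 : Type*) {E F : Type*} [Field 𝕜] [TopologicalSpace 𝕜]
    [AddCommGroup E] [Module 𝕜 E] [TopologicalSpace E]
    [AddCommGroup F] [Module 𝕜 F] [TopologicalSpace F]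
    (U : Set E) (f : E → F) : Prop :=
  ContinuousOn f U ∧
    ∃ g : E × E × 𝕜 → F, ContinuousOn g (UOne 𝕜 U) ∧ IsDiffQuotOn 𝕜 U f g ∧
      IsC1On 𝕜 (UOne 𝕜 U) g

/- Since `t • g (x, y, t)` is the increment of `f` at `x` in the direction `t • y`, additivity and
reparametrisation of increments give, for `t ≠ 0`,
`g (x, v + w, t) = g (x, v, t) + g (x + t • v, w, t)` and `g (x, c • v, t) = c • g (x, v, t * c)`.
Letting `t → 0`, the map `A = g (x, ·, 0)` is linear. For strict differentiability, write
`y - z = t • v` with `‖v‖ ≤ 1` and `‖t‖` comparable to `‖y - z‖`, so that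
`f y - f z - A (y - z) = t • (g (z, v, t) - A v)`; by compactness of the unit ball, the second
factor is small uniformly in `v` for `(z, t)` close to `(x, 0)`. -/

section Algebra

variable {𝕜 E F : Type*} [Field 𝕜] [AddCommGroup E] [Module 𝕜 E] [AddCommGroup F] [Module 𝕜 F]
  {U : Set E} {f : E → F} {g : E × E × 𝕜 → F} {x v w y z : E} {c t : 𝕜}

theorem mk_zero_mem_uOne (hx : x ∈ U) (v : E) : (x, v, (0 : 𝕜)) ∈ UOne 𝕜 U := by
  simp [UOne, hx]

namespace IsDiffQuotOn

theorem apply_of_ne_zero (h : IsDiffQuotOn 𝕜 U f g) (hx : x ∈ U) (hxv : x + t • v ∈ U)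
    (ht : t ≠ 0) : g (x, v, t) = t⁻¹ • (f (x + t • v) - f x) :=
  h (x, v, t) ⟨hx, hxv⟩ ht

theorem apply_add_of_ne_zero (h : IsDiffQuotOn 𝕜 U f g) (hx : x ∈ U) (hxv : x + t • v ∈ U)
    (hxvw : x + t • (v + w) ∈ U) (ht : t ≠ 0) :
    g (x, v + w, t) = g (x, v, t) + g (x + t • v, w, t) := by
  have hadd : x + t • (v + w) = x + t • v + t • w := by rw [smul_add, add_assoc]
  rw [h.apply_of_ne_zero hx hxvw ht, h.apply_of_ne_zero hx hxv ht,
    h.apply_of_ne_zero hxv (hadd ▸ hxvw) ht, hadd, ← smul_add, sub_add_sub_cancel']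

theorem apply_smul_of_ne_zero (h : IsDiffQuotOn 𝕜 U f g) (hx : x ∈ U)
    (hxv : x + t • c • v ∈ U) (ht : t ≠ 0) :
    g (x, c • v, t) = c • g (x, v, t * c) := by
  rcases eq_or_ne c 0 with rfl | hc
  · rw [h.apply_of_ne_zero hx hxv ht]
    simp
  · rw [h.apply_of_ne_zero hx hxv ht,
      h.apply_of_ne_zero hx (by rwa [mul_smul]) (mul_ne_zero ht hc), mul_inv_rev, mul_smul,
      mul_smul, smul_inv_smul₀ hc]

theorem sub_eq_smul_apply (h : IsDiffQuotOn 𝕜 U f g) (hz : z ∈ U) (hy : y ∈ U) (ht : t ≠ 0) :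
    f y - f z = t • g (z, t⁻¹ • (y - z), t) := by
  have hzy : z + t • t⁻¹ • (y - z) = y := by rw [smul_inv_smul₀ ht, add_sub_cancel]
  rw [h.apply_of_ne_zero hz (by rwa [hzy]) ht, hzy, smul_inv_smul₀ ht]

end IsDiffQuotOn

end Algebra

section Topology

variable {𝕜 E F : Type*} [Field 𝕜] [TopologicalSpace 𝕜]
  [AddCommGroup E] [Module 𝕜 E] [TopologicalSpace E] [ContinuousAdd E] [ContinuousSMul 𝕜 E]
  {U : Set E} {x : E}

theorem eventually_add_smul_mem (hU : IsOpen U) (hx : x ∈ U) (v : E) :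
    ∀ᶠ t : 𝕜 in 𝓝 0, x + t • v ∈ U :=
  ContinuousAt.preimage_mem_nhds (by fun_prop) (by simpa using hU.mem_nhds hx)

theorem isOpen_uOne (hU : IsOpen U) : IsOpen (UOne 𝕜 U) :=
  (hU.preimage continuous_fst).inter (hU.preimage (by fun_prop))

variable [TopologicalSpace F] {f : E → F} {g : E × E × 𝕜 → F}

theorem continuousAt_mk_zero_of_continuousOn_uOne (hU : IsOpen U)
    (hg : ContinuousOn g (UOne 𝕜 U)) (hx : x ∈ U) (v : E) : ContinuousAt g (x, v, (0 : 𝕜)) :=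
  hg.continuousAt ((isOpen_uOne hU).mem_nhds (mk_zero_mem_uOne hx v))

variable [(𝓝[≠] (0 : 𝕜)).NeBot] [AddCommGroup F] [Module 𝕜 F] [T2Space F]

namespace IsDiffQuotOn

theorem apply_add_zero [ContinuousAdd F] (h : IsDiffQuotOn 𝕜 U f g) (hU : IsOpen U)
    (hg : ContinuousOn g (UOne 𝕜 U)) (hx : x ∈ U) (v w : E) :
    g (x, v + w, (0 : 𝕜)) = g (x, v, 0) + g (x, w, 0) := by
  have hcont (v : E) := continuousAt_mk_zero_of_continuousOn_uOne hU hg hx v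
  have hleft : ContinuousAt (fun t : 𝕜 ↦ g (x, v + w, t)) 0 :=
    (hcont (v + w)).comp_of_eq (by fun_prop) rfl
  have hright : ContinuousAt (fun t : 𝕜 ↦ g (x, v, t) + g (x + t • v, w, t)) 0 :=
    have hsecond : ContinuousAt (fun t : 𝕜 ↦ g (x + t • v, w, t)) 0 :=
      (hcont w).comp_of_eq (by fun_prop) (by simp)
    ((hcont v).comp_of_eq (f := fun t : 𝕜 ↦ (x, v, t)) (by fun_prop) rfl).add hsecond
  have hmem (u : E) : ∀ᶠ t : 𝕜 in 𝓝[≠] 0, x + t • u ∈ U :=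
    nhdsWithin_le_nhds (eventually_add_smul_mem hU hx u)
  have heq : ∀ᶠ t : 𝕜 in 𝓝[≠] 0, g (x, v + w, t) = g (x, v, t) + g (x + t • v, w, t) := by
    filter_upwards [hmem v, hmem (v + w), self_mem_nhdsWithin] with t hxv hxvw ht
    exact h.apply_add_of_ne_zero hx hxv hxvw ht
  simpa using ((hleft.eventuallyEq_nhds_iff_eventuallyEq_nhdsNE hright).1 heq).eq_of_nhds

theorem apply_smul_zero [ContinuousMul 𝕜] [ContinuousConstSMul 𝕜 F] (h : IsDiffQuotOn 𝕜 U f g)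
    (hU : IsOpen U) (hg : ContinuousOn g (UOne 𝕜 U)) (hx : x ∈ U) (c : 𝕜) (v : E) :
    g (x, c • v, (0 : 𝕜)) = c • g (x, v, 0) := by
  have hcont (v : E) := continuousAt_mk_zero_of_continuousOn_uOne hU hg hx v
  have hleft : ContinuousAt (fun t : 𝕜 ↦ g (x, c • v, t)) 0 :=
    (hcont (c • v)).comp_of_eq (by fun_prop) rfl
  have hright : ContinuousAt (fun t : 𝕜 ↦ c • g (x, v, t * c)) 0 :=
    ((hcont v).comp_of_eq (by fun_prop) (by simp)).const_smul c
  have hmem : ∀ᶠ t : 𝕜 in 𝓝[≠] 0, x + t • c • v ∈ U :=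
    nhdsWithin_le_nhds (eventually_add_smul_mem hU hx (c • v))
  have heq : ∀ᶠ t : 𝕜 in 𝓝[≠] 0, g (x, c • v, t) = c • g (x, v, t * c) := by
    filter_upwards [hmem, self_mem_nhdsWithin] with t hxv ht
    exact h.apply_smul_of_ne_zero hx hxv ht
  simpa using ((hleft.eventuallyEq_nhds_iff_eventuallyEq_nhdsNE hright).1 heq).eq_of_nhds

/-- The derivative `v ↦ f^{[1]} (x, v, 0)` at `x ∈ U` of a map with continuous extended difference
quotient `g = f^{[1]}`, as a continuous linear map. -/
def derivAt [ContinuousMul 𝕜] [ContinuousAdd F] [ContinuousConstSMul 𝕜 F]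
    (h : IsDiffQuotOn 𝕜 U f g) (hU : IsOpen U) (hg : ContinuousOn g (UOne 𝕜 U)) (hx : x ∈ U) :
    E →L[𝕜] F where
  toFun v := g (x, v, 0)
  map_add' := h.apply_add_zero hU hg hx
  map_smul' := h.apply_smul_zero hU hg hx
  cont := hg.comp_continuous (by fun_prop) (mk_zero_mem_uOne hx)

end IsDiffQuotOn

end Topology

theorem eventually_forall_dist_lt_of_isCompact {X Y Z : Type*} [TopologicalSpace X]
    [TopologicalSpace Y] [PseudoMetricSpace Z] {K : Set Y} (hK : IsCompact K) {φ : X × Y → Z}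
    {x₀ : X} (hφ : ∀ y ∈ K, ContinuousAt φ (x₀, y)) {ε : ℝ} (hε : 0 < ε) :
    ∀ᶠ x in 𝓝 x₀, ∀ y ∈ K, dist (φ (x, y)) (φ (x₀, y)) < ε := by
  refine hK.eventually_forall_of_forall_eventually fun y hy ↦ ?_
  have hcenter : ContinuousAt (fun p : X × Y ↦ φ (x₀, p.2)) (x₀, y) :=
    (hφ y hy).comp_of_eq (by fun_prop) rfl
  exact ((hφ y hy).dist hcenter).eventually_lt continuousAt_const (by simpa using hε)

section Normed

variable {𝕜 E F : Type*} [NontriviallyNormedField 𝕜] [NormedAddCommGroup E] [NormedSpace 𝕜 E]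
  [NormedAddCommGroup F] [NormedSpace 𝕜 F]
  {U : Set E} {f : E → F} {g : E × E × 𝕜 → F} {A : E →L[𝕜] F} {x : E}

theorem exists_ne_zero_norm_inv_smul_le_one {c : 𝕜} (hc : 1 < ‖c‖) {v : E} (hv : v ≠ 0) :
    ∃ t : 𝕜, t ≠ 0 ∧ ‖t⁻¹ • v‖ ≤ 1 ∧ ‖t‖ ≤ ‖c‖ * ‖v‖ := by
  obtain ⟨d, hd, hdv, -, hd_inv⟩ := rescale_to_shell hc one_pos hv
  exact ⟨d⁻¹, inv_ne_zero hd, by simpa using hdv.le, by simpa using hd_inv⟩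

theorem IsDiffQuotOn.norm_sub_sub_le (h : IsDiffQuotOn 𝕜 U f g) {y z : E} (hy : y ∈ U)
    (hz : z ∈ U) {c : 𝕜} (hc : 1 < ‖c‖) {η : ℝ}
    (hη : ∀ t : 𝕜, ‖t‖ ≤ ‖c‖ * ‖y - z‖ → ∀ v ∈ closedBall (0 : E) 1, ‖g (z, v, t) - A v‖ ≤ η) :
    ‖f y - f z - A (y - z)‖ ≤ ‖c‖ * ‖y - z‖ * η := by
  rcases eq_or_ne y z with rfl | hyz
  · simp
  obtain ⟨t, ht, hv, ht_le⟩ := exists_ne_zero_norm_inv_smul_le_one hc (sub_ne_zero.2 hyz)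
  set v := t⁻¹ • (y - z) with hv_def
  have hA : A (y - z) = t • A v := by rw [← map_smul, hv_def, smul_inv_smul₀ ht]
  calc ‖f y - f z - A (y - z)‖ = ‖t‖ * ‖g (z, v, t) - A v‖ := by
        rw [h.sub_eq_smul_apply hz hy ht, hA, ← smul_sub, norm_smul]
    _ ≤ ‖c‖ * ‖y - z‖ * η := by
        gcongr
        exact hη t ht_le v (by simpa using hv)

theorem IsDiffQuotOn.hasStrictFDerivAt [LocallyCompactSpace E] (h : IsDiffQuotOn 𝕜 U f g)
    (hU : IsOpen U) (hg : ContinuousOn g (UOne 𝕜 U)) (hx : x ∈ U) :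
    HasStrictFDerivAt f (h.derivAt hU hg hx) x := by
  have : ProperSpace E := .of_locallyCompactSpace 𝕜
  obtain ⟨c, hc⟩ := NormedField.exists_one_lt_norm 𝕜
  have hc₀ : 0 < ‖c‖ := one_pos.trans hc
  refine .of_isLittleO <| Asymptotics.isLittleO_iff.2 fun ε hε ↦ ?_
  have hunif : ∀ᶠ q : E × 𝕜 in 𝓝 (x, 0), ∀ v ∈ closedBall (0 : E) 1,
      dist (g (q.1, v, q.2)) (g (x, v, 0)) < ε / ‖c‖ :=
    eventually_forall_dist_lt_of_isCompact (φ := fun p : (E × 𝕜) × E ↦ g (p.1.1, p.2, p.1.2))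
      (isCompact_closedBall 0 1) (fun v _ ↦
        (continuousAt_mk_zero_of_continuousOn_uOne hU hg hx v).comp_of_eq (by fun_prop) rfl)
      (div_pos hε hc₀)
  obtain ⟨δ, hδ, hball⟩ := Metric.eventually_nhds_iff.1 hunif
  have hU₁ : ∀ᶠ p : E × E in 𝓝 (x, x), p.1 ∈ U := continuousAt_fst (hU.mem_nhds hx)
  have hU₂ : ∀ᶠ p : E × E in 𝓝 (x, x), p.2 ∈ U := continuousAt_snd (hU.mem_nhds hx)
  have hnear : ∀ᶠ p : E × E in 𝓝 (x, x), dist p.2 x < δ :=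
    ContinuousAt.eventually_lt (by fun_prop) continuousAt_const (by simpa using hδ)
  have hscale : ∀ᶠ p : E × E in 𝓝 (x, x), ‖c‖ * ‖p.1 - p.2‖ < δ :=
    ContinuousAt.eventually_lt (by fun_prop) continuousAt_const (by simpa using hδ)
  filter_upwards [hU₁, hU₂, hnear, hscale] with ⟨y, z⟩ hy hz hzx hyz
  calc ‖f y - f z - h.derivAt hU hg hx (y - z)‖ ≤ ‖c‖ * ‖y - z‖ * (ε / ‖c‖) := by
        refine h.norm_sub_sub_le hy hz hc fun t ht v hv ↦ ?_
        rw [← dist_eq_norm]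
        exact (hball (y := (z, t)) (by simpa [Prod.dist_eq, hzx] using ht.trans_lt hyz) v hv).le
    _ = ε * ‖y - z‖ := by field_simp

end Normed

/- This covers `ℝ` over `ℚ`, which is locally compact but infinite-dimensional. -/
theorem C1_implies_strictly_differentiable_of_locallyCompact_general
    {𝕜 : Type*} [NontriviallyNormedField 𝕜]
    {E F : Type*} [NormedAddCommGroup E] [NormedSpace 𝕜 E] [LocallyCompactSpace E]
    [NormedAddCommGroup F] [NormedSpace 𝕜 F]
    {U : Set E} (hU : IsOpen U) (f : E → F) (g : E × E × 𝕜 → F)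
    (hgc : ContinuousOn g (UOne 𝕜 U)) (hgq : IsDiffQuotOn 𝕜 U f g) :
    ∀ x ∈ U, ∃ A : E →L[𝕜] F, (∀ y : E, A y = g (x, y, (0 : 𝕜))) ∧
      ∀ ε : ℝ, 0 < ε → ∃ W : Set E, IsOpen W ∧ x ∈ W ∧ W ⊆ U ∧
        ∀ y ∈ W, ∀ z ∈ W, ‖f y - f z - A (y - z)‖ ≤ ε * ‖y - z‖ := by
  intro x hx
  refine ⟨hgq.derivAt hU hgc hx, fun _ ↦ rfl, fun ε hε ↦ ?_⟩
  obtain ⟨V, hV, hxV, hle⟩ :=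
    exists_nhds_square ((hgq.hasStrictFDerivAt hU hgc hx).isLittleO.def hε)
  exact ⟨V ∩ U, hV.inter hU, ⟨hxV, hx⟩, inter_subset_right,
    fun y hy z hz ↦ hle (mk_mem_prod hy.1 hz.1)⟩

/-- **C¹ implies strict differentiability in finite dimensions over locally compact
fields.**  Let `𝕜` be a locally compact valued field, `E` a finite-dimensional
normed `𝕜`-vector space, `F` a normed `𝕜`-vector space, `U ⊆ E` open, and
`f : U → F` a `C¹` map with witnessing continuous map `g = f^{[1]}`.  Then `f` is
strictly differentiable at every `x ∈ U`, with derivative the continuous linear map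
`y ↦ g (x, y, 0)`. -/
theorem C1_implies_strictly_differentiable_of_locallyCompact
    {𝕜 : Type*} [NontriviallyNormedField 𝕜] [LocallyCompactSpace 𝕜]
    {E F : Type*} [NormedAddCommGroup E] [NormedSpace 𝕜 E] [FiniteDimensional 𝕜 E]
    [NormedAddCommGroup F] [NormedSpace 𝕜 F]
    {U : Set E} (hU : IsOpen U)
    (f : E → F) (hfc : ContinuousOn f U)
    (g : E × E × 𝕜 → F)
    (hgc : ContinuousOn g (UOne 𝕜 U)) (hgq : IsDiffQuotOn 𝕜 U f g) :
    ∀ x ∈ U, ∃ A : E →L[𝕜] F, (∀ y : E, A y = g (x, y, (0 : 𝕜))) ∧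
      ∀ ε : ℝ, 0 < ε → ∃ W : Set E, IsOpen W ∧ x ∈ W ∧ W ⊆ U ∧
        ∀ y ∈ W, ∀ z ∈ W, ‖f y - f z - A (y - z)‖ ≤ ε * ‖y - z‖ := by
  have : ProperSpace 𝕜 := .of_locallyCompactSpace 𝕜
  have : ProperSpace E := FiniteDimensional.proper 𝕜 E
  exact C1_implies_strictly_differentiable_of_locallyCompact_general hU f g hgc hgq
end

section
/- C² implies strict differentiability: Let (𝕜,|·|) be a valued field, E and F normed 𝕜-vector spaces, U ⊆ E open, and f : U → F a C² map with witnessing continuous map f^{[1]} : U^{[1]} → F (so f^{[1]} is itself C¹ on U^{[1]}). Then f is strictly differentiable at every point of U: for each x ∈ U there is a continuous 𝕜-linear map A : E → F with A(y) = f^{[1]}(x,y,0) for all y ∈ E such that for every ε > 0 there is a neighbourhood W of x in U with ‖f(y) − f(z) − A(y − z)‖ ≤ ε·‖y − z‖ for all y, z ∈ W. -/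
open Set Metric Filter Topology

/-! The map `A := g (x, ·, 0)` is linear because the difference quotients satisfy
`g (x, y + z, t) = g (x, y, t) + g (x + t • y, z, t)` and `g (x, s • y, t) = s • g (x, y, s * t)`
for `t ≠ 0`, and both identities extend to `t = 0` by continuity.

Write `y - z = t • v` with `v` in a fixed ball and `‖t‖ ≤ C * ‖y - z‖`. Then
`f y - f z - A (y - z) = t • (g (z, v, t) - g (x, v, 0))`, so `f` is strictly differentiable at `x`
as soon as `g` is uniformly continuous near `(x, 0, 0)`. The same decomposition gives
`f y - f z = t • g (z, v, t)`, so a `C¹` map is locally Lipschitz; applied to `g` in place of `f`,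
this yields the uniform continuity. -/

section UOne

variable {𝕜 E : Type*} [Field 𝕜] [AddCommGroup E] [Module 𝕜 E] {U : Set E}

theorem mk_zero_mem_UOne_iff {x y : E} : (x, y, (0 : 𝕜)) ∈ UOne 𝕜 U ↔ x ∈ U := by
  simp [UOne]

theorem isOpen_UOne [TopologicalSpace 𝕜] [TopologicalSpace E] [ContinuousAdd E]
    [ContinuousSMul 𝕜 E] (hU : IsOpen U) : IsOpen (UOne 𝕜 U) :=
  (hU.preimage continuous_fst).inter
    (hU.preimage (f := fun p : E × E × 𝕜 ↦ p.1 + p.2.2 • p.2.1) (by fun_prop))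

theorem UOne_mem_nhds_mk_zero [TopologicalSpace 𝕜] [TopologicalSpace E] [ContinuousAdd E]
    [ContinuousSMul 𝕜 E] (hU : IsOpen U) {x : E} (hx : x ∈ U) (y : E) :
    UOne 𝕜 U ∈ 𝓝 (x, y, 0) :=
  (isOpen_UOne hU).mem_nhds (mk_zero_mem_UOne_iff.2 hx)

end UOne

namespace IsDiffQuotOn

section Algebra

variable {𝕜 E F : Type*} [Field 𝕜] [AddCommGroup E] [Module 𝕜 E] [AddCommGroup F] [Module 𝕜 F]
  {U : Set E} {f : E → F} {g : E × E × 𝕜 → F} {x y z v : E} {s t : 𝕜}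

theorem smul_apply (hg : IsDiffQuotOn 𝕜 U f g) (h : (x, y, t) ∈ UOne 𝕜 U) :
    t • g (x, y, t) = f (x + t • y) - f x := by
  rcases eq_or_ne t 0 with rfl | ht
  · simp
  · rw [hg _ h ht, smul_inv_smul₀ ht]

theorem smul_apply_sub (hg : IsDiffQuotOn 𝕜 U f g) (hy : y ∈ U) (hz : z ∈ U)
    (h : t • v = y - z) : t • g (z, v, t) = f y - f z := by
  have hadd : z + t • v = y := by rw [h, add_sub_cancel]
  rw [hg.smul_apply ⟨hz, by simpa only [hadd] using hy⟩, hadd]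

theorem map_add_of_ne_zero (hg : IsDiffQuotOn 𝕜 U f g) (ht : t ≠ 0)
    (hyz : (x, y + z, t) ∈ UOne 𝕜 U) (hy : (x, y, t) ∈ UOne 𝕜 U) :
    g (x, y + z, t) = g (x, y, t) + g (x + t • y, z, t) := by
  have hassoc : x + t • y + t • z = x + t • (y + z) := by rw [smul_add, add_assoc]
  have hz : (x + t • y, z, t) ∈ UOne 𝕜 U := ⟨hy.2, by simpa only [hassoc] using hyz.2⟩
  rw [← smul_right_inj ht, smul_add, hg.smul_apply hyz, hg.smul_apply hy, hg.smul_apply hz, hassoc,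
    sub_add_sub_cancel']

theorem map_smul_of_ne_zero (hg : IsDiffQuotOn 𝕜 U f g) (ht : t ≠ 0)
    (h : (x, s • y, t) ∈ UOne 𝕜 U) : g (x, s • y, t) = s • g (x, y, s * t) := by
  have hassoc : (s * t) • y = t • s • y := by rw [mul_comm, mul_smul]
  have hst : (x, y, s * t) ∈ UOne 𝕜 U := ⟨h.1, by simpa only [hassoc] using h.2⟩
  rw [← smul_right_inj ht, smul_smul, mul_comm t s, hg.smul_apply h, hg.smul_apply hst, hassoc]

end Algebra

section Topology

variable {𝕜 E F : Type*} [Field 𝕜] [TopologicalSpace 𝕜] [(𝓝[≠] (0 : 𝕜)).NeBot]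
  [AddCommGroup E] [Module 𝕜 E] [TopologicalSpace E] [ContinuousAdd E] [ContinuousSMul 𝕜 E]
  [AddCommGroup F] [Module 𝕜 F] [TopologicalSpace F] [T2Space F]
  {U : Set E} {f : E → F} {g : E × E × 𝕜 → F} {x : E}

theorem map_add_at_zero [ContinuousAdd F] (hg : IsDiffQuotOn 𝕜 U f g)
    (hgc : ContinuousOn g (UOne 𝕜 U)) (hU : IsOpen U) (hx : x ∈ U) (y z : E) :
    g (x, y + z, 0) = g (x, y, 0) + g (x, z, 0) := by
  have hat (v : E) : ContinuousAt g (x, v, 0) := hgc.continuousAt (UOne_mem_nhds_mk_zero hU hx v)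
  have hcurve (v : E) : ContinuousAt (fun t : 𝕜 ↦ (x, v, t)) 0 := by fun_prop
  have hleft : ContinuousAt (fun t : 𝕜 ↦ g (x, y + z, t)) 0 :=
    (hat _).comp_of_eq (hcurve _) rfl
  have hright : ContinuousAt (fun t : 𝕜 ↦ g (x, y, t) + g (x + t • y, z, t)) 0 :=
    ((hat y).comp_of_eq (hcurve y) rfl).add <|
      (hat z).comp_of_eq (f := fun t : 𝕜 ↦ (x + t • y, z, t)) (by fun_prop) (by simp)
  have heq : ∀ᶠ t : 𝕜 in 𝓝[≠] 0, g (x, y + z, t) = g (x, y, t) + g (x + t • y, z, t) := by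
    filter_upwards [self_mem_nhdsWithin,
      nhdsWithin_le_nhds (hcurve (y + z) (UOne_mem_nhds_mk_zero hU hx _)),
      nhdsWithin_le_nhds (hcurve y (UOne_mem_nhds_mk_zero hU hx _))] with t ht hyz hy
    exact hg.map_add_of_ne_zero ht hyz hy
  simpa using ((hleft.eventuallyEq_nhds_iff_eventuallyEq_nhdsNE hright).1 heq).eq_of_nhds

theorem map_smul_at_zero [ContinuousMul 𝕜] [ContinuousConstSMul 𝕜 F] (hg : IsDiffQuotOn 𝕜 U f g)
    (hgc : ContinuousOn g (UOne 𝕜 U)) (hU : IsOpen U) (hx : x ∈ U) (s : 𝕜) (y : E) :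
    g (x, s • y, 0) = s • g (x, y, 0) := by
  have hat (v : E) : ContinuousAt g (x, v, 0) := hgc.continuousAt (UOne_mem_nhds_mk_zero hU hx v)
  have hcurve : ContinuousAt (fun t : 𝕜 ↦ (x, s • y, t)) 0 := by fun_prop
  have hleft : ContinuousAt (fun t : 𝕜 ↦ g (x, s • y, t)) 0 := (hat _).comp_of_eq hcurve rfl
  have hright : ContinuousAt (fun t : 𝕜 ↦ s • g (x, y, s * t)) 0 :=
    ((hat y).comp_of_eq (f := fun t : 𝕜 ↦ (x, y, s * t)) (by fun_prop) (by simp)).const_smul s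
  have heq : ∀ᶠ t : 𝕜 in 𝓝[≠] 0, g (x, s • y, t) = s • g (x, y, s * t) := by
    filter_upwards [self_mem_nhdsWithin,
      nhdsWithin_le_nhds (hcurve (UOne_mem_nhds_mk_zero hU hx _))] with t ht h
    exact hg.map_smul_of_ne_zero ht h
  simpa using ((hleft.eventuallyEq_nhds_iff_eventuallyEq_nhdsNE hright).1 heq).eq_of_nhds

/-- The differential `y ↦ f^{[1]}(x, y, 0)` at `x` of a `C¹` map `f`, whose witness `f^{[1]}`
is `g`. -/
def differential [ContinuousMul 𝕜] [ContinuousAdd F] [ContinuousConstSMul 𝕜 F]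
    (hg : IsDiffQuotOn 𝕜 U f g) (hgc : ContinuousOn g (UOne 𝕜 U)) (hU : IsOpen U) (hx : x ∈ U) :
    E →L[𝕜] F where
  toFun y := g (x, y, 0)
  map_add' := hg.map_add_at_zero hgc hU hx
  map_smul' := hg.map_smul_at_zero hgc hU hx
  cont := hgc.comp_continuous (by fun_prop) fun _ ↦ mk_zero_mem_UOne_iff.2 hx

end Topology

end IsDiffQuotOn

theorem exists_smul_eq_norm_lt_norm_le (𝕜 : Type*) {E : Type*} [NontriviallyNormedField 𝕜]
    [NormedAddCommGroup E] [NormedSpace 𝕜 E] {η : ℝ} (hη : 0 < η) :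
    ∃ C : ℝ, 0 ≤ C ∧
      ∀ w : E, ∃ (t : 𝕜) (v : E), t • v = w ∧ ‖v‖ < η ∧ ‖t‖ ≤ C * ‖w‖ := by
  obtain ⟨c, hc⟩ := NormedField.exists_one_lt_norm 𝕜
  refine ⟨η⁻¹ * ‖c‖, by positivity, fun w ↦ ?_⟩
  rcases eq_or_ne w 0 with rfl | hw
  · exact ⟨0, 0, by simp [hη]⟩
  · obtain ⟨d, hd, hdη, -, hdw⟩ := rescale_to_shell hc hη hw
    exact ⟨d⁻¹, d • w, inv_smul_smul₀ hd w, hdη, by rwa [norm_inv]⟩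

theorem tendsto_snd_prodMk_sub {E G : Type*} [SeminormedAddCommGroup E]
    [SeminormedAddCommGroup G] {C : ℝ} {t : E → G} (ht : ∀ w, ‖t w‖ ≤ C * ‖w‖) (x : E) :
    Tendsto (fun p : E × E ↦ (p.2, t (p.1 - p.2))) (𝓝 (x, x)) (𝓝 (x, 0)) := by
  have hsub : Tendsto (fun p : E × E ↦ C * ‖p.1 - p.2‖) (𝓝 (x, x)) (𝓝 0) :=
    Continuous.tendsto' (by fun_prop) _ _ (by simp)
  exact (continuous_snd.tendsto _).prodMk_nhds (squeeze_zero_norm (fun _ ↦ ht _) hsub)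

section Normed

variable {𝕜 E F : Type*} [NontriviallyNormedField 𝕜] [NormedAddCommGroup E] [NormedSpace 𝕜 E]
  [NormedAddCommGroup F] [NormedSpace 𝕜 F] {U : Set E} {f : E → F} {g : E × E × 𝕜 → F} {x : E}

namespace IsDiffQuotOn

theorem exists_lipschitzOnWith (hg : IsDiffQuotOn 𝕜 U f g) (hU : U ∈ 𝓝 x)
    (hgc : ContinuousAt g (x, 0, 0)) : ∃ K, ∃ s ∈ 𝓝 x, LipschitzOnWith K f s := by
  obtain ⟨M, hM⟩ : ∃ M, ∀ᶠ p in 𝓝 (x, 0, 0), ‖g p‖ ≤ M := hgc.norm.isBoundedUnder_le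
  obtain ⟨η, hη, hball⟩ := Metric.eventually_nhds_iff_ball.1 hM
  obtain ⟨C, hC, hdecomp⟩ := exists_smul_eq_norm_lt_norm_le 𝕜 (E := E) hη
  choose t v htv hv ht using hdecomp
  have hnear : ∀ᶠ p : E × E in 𝓝 (x, x), ‖f p.1 - f p.2‖ ≤ C * M * ‖p.1 - p.2‖ := by
    filter_upwards [prod_mem_nhds hU hU,
      tendsto_snd_prodMk_sub ht x (ball_mem_nhds _ hη)] with p hp hpη
    have hbound : ‖g (p.2, v (p.1 - p.2), t (p.1 - p.2))‖ ≤ M := hball _ (by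
      simp only [mem_preimage, ← ball_prod_same, mem_prod] at hpη ⊢
      exact ⟨hpη.1, mem_ball_zero_iff.2 (hv _), hpη.2⟩)
    calc ‖f p.1 - f p.2‖
        = ‖t (p.1 - p.2)‖ * ‖g (p.2, v (p.1 - p.2), t (p.1 - p.2))‖ := by
          rw [← norm_smul, hg.smul_apply_sub hp.1 hp.2 (htv _)]
      _ ≤ C * ‖p.1 - p.2‖ * M := by gcongr; exact ht _
      _ = C * M * ‖p.1 - p.2‖ := by ring
  obtain ⟨s, hs, hxs, hfs⟩ := exists_nhds_square hnear
  exact ⟨(C * M).toNNReal, s, hs.mem_nhds hxs, LipschitzOnWith.of_dist_le' fun y hy z hz ↦ by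
    simpa only [dist_eq_norm, mem_ofPred_eq] using hfs (mk_mem_prod hy hz)⟩

theorem hasStrictFDerivAt_of_tendstoUniformlyOn (hg : IsDiffQuotOn 𝕜 U f g) (hU : U ∈ 𝓝 x)
    {A : E →L[𝕜] F} {V : Set E} (hV : V ∈ 𝓝 0)
    (h : TendstoUniformlyOn (fun (p : E × 𝕜) v ↦ g (p.1, v, p.2)) A (𝓝 (x, 0)) V) :
    HasStrictFDerivAt f A x := by
  obtain ⟨η, hη, hηV⟩ := Metric.mem_nhds_iff.1 hV
  obtain ⟨C, hC, hdecomp⟩ := exists_smul_eq_norm_lt_norm_le 𝕜 (E := E) hη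
  choose t v htv hv ht using hdecomp
  refine .of_isLittleO <| Asymptotics.isLittleO_iff.2 fun ε hε ↦ ?_
  have hδ : 0 < ε / (C + 1) := by positivity
  filter_upwards [prod_mem_nhds hU hU, (tendsto_snd_prodMk_sub ht x).eventually
    (Metric.tendstoUniformlyOn_iff.1 h _ hδ)] with p hp hclose
  set w := p.1 - p.2
  have hquot : ‖g (p.2, v w, t w) - A (v w)‖ ≤ ε / (C + 1) := by
    simpa only [dist_eq_norm, norm_sub_rev] using
      (hclose (v w) (hηV (mem_ball_zero_iff.2 (hv w)))).le
  calc ‖f p.1 - f p.2 - A w‖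
      = ‖t w‖ * ‖g (p.2, v w, t w) - A (v w)‖ := by
        rw [← norm_smul, smul_sub, hg.smul_apply_sub hp.1 hp.2 (htv w), ← map_smul, htv]
    _ ≤ C * ‖w‖ * (ε / (C + 1)) := by gcongr; exact ht w
    _ ≤ (C + 1) * ‖w‖ * (ε / (C + 1)) := by gcongr; linarith
    _ = ε * ‖w‖ := by field_simp

theorem hasStrictFDerivAt_differential (hg : IsDiffQuotOn 𝕜 U f g)
    (hgc : ContinuousOn g (UOne 𝕜 U)) (hU : IsOpen U) (hx : x ∈ U)
    {s : Set (E × E × 𝕜)} (hs : s ∈ 𝓝 (x, 0, 0)) (hgs : UniformContinuousOn g s) :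
    HasStrictFDerivAt f (hg.differential hgc hU hx) x := by
  obtain ⟨η, hη, hηs⟩ := Metric.mem_nhds_iff.1 hs
  have hmaps : MapsTo (fun q : (E × 𝕜) × E ↦ (q.1.1, q.2, q.1.2))
      (ball (x, 0) η ×ˢ ball 0 η) s := fun q hq ↦ hηs <| by
    simp only [← ball_prod_same, mem_prod] at hq ⊢
    exact ⟨hq.1.1, hq.2, hq.1.2⟩
  have hunif : UniformContinuousOn ↿(fun (p : E × 𝕜) v ↦ g (p.1, v, p.2))
      (ball (x, 0) η ×ˢ ball 0 η) :=
    hgs.comp (UniformContinuous.uniformContinuousOn (by fun_prop)) hmaps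
  have hlim := hunif.tendstoUniformlyOn (mem_ball_self hη)
  rw [isOpen_ball.nhdsWithin_eq (mem_ball_self hη)] at hlim
  exact hg.hasStrictFDerivAt_of_tendstoUniformlyOn (hU.mem_nhds hx) (ball_mem_nhds _ hη) hlim

end IsDiffQuotOn

theorem IsC1On.locallyLipschitzOn (hf : IsC1On 𝕜 U f) (hU : IsOpen U) :
    LocallyLipschitzOn U f := by
  intro x hx
  obtain ⟨-, g, hgc, hg⟩ := hf
  rw [hU.nhdsWithin_eq hx]
  exact hg.exists_lipschitzOnWith (hU.mem_nhds hx) <|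
    hgc.continuousAt (UOne_mem_nhds_mk_zero hU hx 0)

theorem exists_isOpen_norm_sub_sub_le_of_hasStrictFDerivAt {A : E →L[𝕜] F}
    (hf : HasStrictFDerivAt f A x) (hU : U ∈ 𝓝 x) {ε : ℝ} (hε : 0 < ε) :
    ∃ W : Set E, IsOpen W ∧ x ∈ W ∧ W ⊆ U ∧
      ∀ y ∈ W, ∀ z ∈ W, ‖f y - f z - A (y - z)‖ ≤ ε * ‖y - z‖ := by
  obtain ⟨W, hW, hxW, hWs⟩ :=
    exists_nhds_square (inter_mem (prod_mem_nhds hU hU) (hf.isLittleO.def hε))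
  exact ⟨W, hW, hxW, fun y hy ↦ (hWs (mk_mem_prod hy hy)).1.1,
    fun y hy z hz ↦ (hWs (mk_mem_prod hy hz)).2⟩

end Normed

theorem C2_implies_strictly_differentiable_general
    {𝕜 : Type*} [NontriviallyNormedField 𝕜]
    {E F : Type*} [NormedAddCommGroup E] [NormedSpace 𝕜 E]
    [NormedAddCommGroup F] [NormedSpace 𝕜 F]
    {U : Set E} (hU : IsOpen U) {f : E → F} {g : E × E × 𝕜 → F}
    (hgc : ContinuousOn g (UOne 𝕜 U)) (hgq : IsDiffQuotOn 𝕜 U f g)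
    (hgu : ∀ x ∈ U, ∃ s ∈ 𝓝 (x, 0, 0), UniformContinuousOn g s) :
    ∀ x ∈ U, ∃ A : E →L[𝕜] F, (∀ y : E, A y = g (x, y, (0 : 𝕜))) ∧
      ∀ ε : ℝ, 0 < ε → ∃ W : Set E, IsOpen W ∧ x ∈ W ∧ W ⊆ U ∧
        ∀ y ∈ W, ∀ z ∈ W, ‖f y - f z - A (y - z)‖ ≤ ε * ‖y - z‖ := by
  intro x hx
  obtain ⟨s, hs, hgs⟩ := hgu x hx
  have hf := hgq.hasStrictFDerivAt_differential hgc hU hx hs hgs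
  exact ⟨hgq.differential hgc hU hx, fun _ ↦ rfl, fun _ hε ↦
    exists_isOpen_norm_sub_sub_le_of_hasStrictFDerivAt hf (hU.mem_nhds hx) hε⟩

/-- **C² implies strict differentiability.**  Let `𝕜` be a valued field, `E` and `F`
normed `𝕜`-vector spaces, `U ⊆ E` open, and `f : U → F` a `C²` map with witnessing
continuous map `g = f^{[1]}` (itself `C¹` on `U^{[1]}`).  Then `f` is strictly
differentiable at every `x ∈ U`, with derivative the continuous linear map
`y ↦ g (x, y, 0)`. -/
theorem C2_implies_strictly_differentiable
    {𝕜 : Type*} [NontriviallyNormedField 𝕜]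
    {E F : Type*} [NormedAddCommGroup E] [NormedSpace 𝕜 E]
    [NormedAddCommGroup F] [NormedSpace 𝕜 F]
    {U : Set E} (hU : IsOpen U)
    (f : E → F) (hfc : ContinuousOn f U)
    (g : E × E × 𝕜 → F)
    (hgc : ContinuousOn g (UOne 𝕜 U)) (hgq : IsDiffQuotOn 𝕜 U f g)
    (hgC1 : IsC1On 𝕜 (UOne 𝕜 U) g) :
    ∀ x ∈ U, ∃ A : E →L[𝕜] F, (∀ y : E, A y = g (x, y, (0 : 𝕜))) ∧
      ∀ ε : ℝ, 0 < ε → ∃ W : Set E, IsOpen W ∧ x ∈ W ∧ W ⊆ U ∧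
        ∀ y ∈ W, ∀ z ∈ W, ‖f y - f z - A (y - z)‖ ≤ ε * ‖y - z‖ := by
  refine C2_implies_strictly_differentiable_general hU hgc hgq fun x hx ↦ ?_
  have hmem : (x, 0, 0) ∈ UOne 𝕜 U := mk_zero_mem_UOne_iff.2 hx
  obtain ⟨K, s, hs, hgs⟩ := hgC1.locallyLipschitzOn (isOpen_UOne hU) hmem
  exact ⟨s, (isOpen_UOne hU).nhdsWithin_eq hmem ▸ hs, hgs.uniformContinuousOn⟩
end
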